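/- arXiv:1511.01355 — 4 statements merged into one kernel-verified Lean document; each statement's English description precedes it below -/
import Mathlib

section
/- Let 0 < b < a be real numbers, c = √(a² − b²), and let h > 0 be determined by sinh(h/2) = c/b (equivalently cosh(h/2) = a/b). Define q̂₀ : ℝ → ℝ² by q̂₀(s) = (a tanh s, b sech s). Then for every s ∈ ℝ the focus (−c, 0) lies on the segment joining q̂₀(s) to −q̂₀(s+h); that is, there exists t ∈ [0,1] with (−c, 0) = (1−t)·q̂₀(s) + t·(−q̂₀(s+h)). -/
/-! Scaling `q̂₀(s)` by `cosh s` gives `(a sinh s, b)`, whose second coordinate does not depend on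
`s`. So with weights proportional to `cosh s` and `cosh s'` the vertical coordinates of `q̂₀(s)` and
`−q̂₀(s')` cancel, and the chord joining them meets the axis at abscissa
`−a (sinh s' − sinh s) / (cosh s + cosh s') = −a tanh ((s' − s) / 2)`. This depends only on the
shift `s' − s`, and for the shift `h` it equals `−c`. -/

open Real

theorem sinh_sub_sinh_eq_tanh_mul_cosh_add_cosh (x y : ℝ) :
    sinh x - sinh y = tanh ((x - y) / 2) * (cosh x + cosh y) := by
  obtain ⟨m, d, rfl, rfl⟩ : ∃ m d, x = m + d ∧ y = m - d :=
    ⟨(x + y) / 2, (x - y) / 2, by ring, by ring⟩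
  have hd : cosh d ≠ 0 := (cosh_pos d).ne'
  rw [show (m + d - (m - d)) / 2 = d by ring, tanh_eq_sinh_div_cosh,
    sinh_add, sinh_sub, cosh_add, cosh_sub]
  field_simp
  ring

theorem mul_tanh_eq_of_sinh_eq_div {a b c x : ℝ} (ha : 0 < a) (hb : 0 < b)
    (hc : c ^ 2 = a ^ 2 - b ^ 2) (hx : sinh x = c / b) : a * tanh x = c := by
  have cosh_eq : cosh x = a / b := by
    rw [← sq_eq_sq₀ (cosh_pos x).le (by positivity), cosh_sq, hx, div_pow, hc]
    field_simp
    ring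
  rw [tanh_eq_sinh_div_cosh, hx, cosh_eq]
  field_simp

/-- The natural parametrization `q̂₀` of the upper half of the ellipse with semi-axes `a` and `b`,
in which the billiard dynamics through the foci is a translation of the parameter. -/
noncomputable def semiEllipseParam (a b s : ℝ) : ℝ × ℝ :=
  (a * tanh s, b * (1 / cosh s))

theorem cosh_smul_semiEllipseParam (a b s : ℝ) :
    cosh s • semiEllipseParam a b s = (a * sinh s, b) := by
  have hs : cosh s ≠ 0 := (cosh_pos s).ne'
  ext <;> simp only [semiEllipseParam, Prod.smul_mk, smul_eq_mul, tanh_eq_sinh_div_cosh] <;>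
    field_simp

theorem neg_mul_tanh_mem_segment_semiEllipseParam (a b s s' : ℝ) :
    (-(a * tanh ((s' - s) / 2)), 0) ∈
      segment ℝ (semiEllipseParam a b s) (-semiEllipseParam a b s') := by
  have hs : 0 < cosh s := cosh_pos s
  have hs' : 0 < cosh s' := cosh_pos s'
  refine mem_segment_iff_div.2 ⟨cosh s, cosh s', hs.le, hs'.le, add_pos hs hs', ?_⟩
  have weighted_sum : cosh s • semiEllipseParam a b s + cosh s' • -semiEllipseParam a b s' =
      (cosh s + cosh s') • (-(a * tanh ((s' - s) / 2)), 0) := by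
    rw [smul_neg, cosh_smul_semiEllipseParam, cosh_smul_semiEllipseParam, Prod.smul_mk, smul_zero]
    ext
    · simp only [Prod.fst_add, Prod.fst_neg, smul_eq_mul]
      linear_combination -a * sinh_sub_sinh_eq_tanh_mul_cosh_add_cosh s' s
    · exact add_neg_cancel b
  rw [div_eq_inv_mul, div_eq_inv_mul, mul_smul, mul_smul, ← smul_add, weighted_sum,
    inv_smul_smul₀ (add_pos hs hs').ne']

/-- For the ellipse with semi-axes `0 < b < a`, semi-focal distance `c = √(a² − b²)`
and characteristic exponent `h` (with `sinh(h/2) = c/b`), the focus `(−c, 0)` lies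
on the segment joining `q̂₀(s) = (a tanh s, b sech s)` to `−q̂₀(s + h)`. -/
theorem focus_on_segment (a b c h : ℝ) (hb : 0 < b) (hab : b < a)
    (hc : c = Real.sqrt (a ^ 2 - b ^ 2)) (hh : 0 < h)
    (hsinh : Real.sinh (h / 2) = c / b)
    (q : ℝ → ℝ × ℝ)
    (hq : q = fun s => (a * Real.tanh s, b * (1 / Real.cosh s)))
    (s : ℝ) :
    ∃ t ∈ Set.Icc (0 : ℝ) 1,
      ((-c, 0) : ℝ × ℝ) = (1 - t) • q s + t • (-(q (s + h))) := by
  have c_sq : c ^ 2 = a ^ 2 - b ^ 2 := by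
    rw [hc, sq_sqrt (sub_nonneg.2 (pow_le_pow_left₀ hb.le hab.le 2))]
  have mul_tanh_eq : a * tanh (h / 2) = c :=
    mul_tanh_eq_of_sinh_eq_div (hb.trans hab) hb c_sq hsinh
  have focus_mem : (-c, 0) ∈ segment ℝ (q s) (-q (s + h)) := by
    have axis_mem := neg_mul_tanh_mem_segment_semiEllipseParam a b s (s + h)
    rwa [add_sub_cancel_left, mul_tanh_eq, show semiEllipseParam a b = q from hq.symm] at axis_mem
  rw [segment_eq_image] at focus_mem
  obtain ⟨t, ht, combination_eq⟩ := focus_mem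
  exact ⟨t, ht, combination_eq.symm⟩
end

section
/- Let 0 < b < a be real numbers, let h > 0 be determined by sinh(h/2) = √(a² − b²)/b, and define μ̂₁ : ℝ → ℝ by μ̂₁(s) = a/b³ − ab/(a² sech² s + b² tanh² s)². Then for every s ∈ ℝ the family (μ̂₁(s + j·h))_{j ∈ ℤ} is summable. -/
/-! Since `tanh² = 1 - sech²`, the value `μ̂₁(t)` is a function of `u = sech² t` alone,
differentiable at `u = 0` and vanishing there. As `cosh t ≥ |t|`, this gives
`μ̂₁(t) = O(sech² t) = O(|t|⁻²)` at infinity, which is enough decay for summability along any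
arithmetic progression. -/

open Filter Topology Asymptotics

theorem tendsto_add_intCast_mul_cocompact {h : ℝ} (hh : h ≠ 0) (s : ℝ) :
    Tendsto (fun j : ℤ => s + j * h) cofinite (cocompact ℝ) :=
  let affine : ℝ ≃ₜ ℝ := (Homeomorph.mulRight₀ h hh).trans (Homeomorph.addLeft s)
  affine.isClosedEmbedding.tendsto_cocompact.comp Int.tendsto_coe_cofinite

theorem summable_abs_add_intCast_mul_rpow_neg {p h : ℝ} (hp : 1 < p) (hh : h ≠ 0) (s : ℝ) :
    Summable (fun j : ℤ => |s + j * h| ^ (-p)) := by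
  have hscale (j : ℤ) : |s + j * h| ^ (-p) = |h| ^ (-p) * (1 / |j + s / h| ^ p) := by
    have hfactor : s + j * h = h * (j + s / h) := by field_simp; ring
    rw [hfactor, abs_mul, Real.mul_rpow (abs_nonneg _) (abs_nonneg _),
      Real.rpow_neg (abs_nonneg (j + s / h)), one_div]
  simpa only [hscale] using
    ((Real.summable_one_div_int_add_rpow (s / h) p).mpr hp).mul_left (|h| ^ (-p))

theorem summable_comp_add_intCast_mul_of_isBigO_rpow {E : Type*} [NormedAddCommGroup E]
    [CompleteSpace E] {f : ℝ → E} {p h : ℝ} (hp : 1 < p)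
    (hf : f =O[cocompact ℝ] fun t => |t| ^ (-p)) (hh : h ≠ 0) (s : ℝ) :
    Summable (fun j : ℤ => f (s + j * h)) :=
  summable_of_isBigO (summable_abs_add_intCast_mul_rpow_neg hp hh s)
    (hf.comp_tendsto (tendsto_add_intCast_mul_cocompact hh s))

theorem abs_le_cosh (t : ℝ) : |t| ≤ Real.cosh t :=
  calc
    |t| ≤ Real.sinh |t| := Real.self_le_sinh_iff.mpr (abs_nonneg t)
    _ ≤ Real.cosh |t| := (Real.sinh_lt_cosh _).le
    _ = Real.cosh t := Real.cosh_abs t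

theorem sech_sq_isBigO_abs_rpow_neg_two :
    (fun t : ℝ => (1 / Real.cosh t) ^ 2) =O[cocompact ℝ] fun t => |t| ^ (-2 : ℝ) := by
  refine IsBigO.of_bound' ?_
  filter_upwards [(Set.finite_singleton (0 : ℝ)).isCompact.compl_mem_cocompact] with t ht
  have ht_pos : 0 < |t| := abs_pos.mpr ht
  have hpow : |t| ^ (-2 : ℝ) = (1 / |t|) ^ 2 := by
    rw [Real.rpow_neg ht_pos.le, Real.rpow_two, one_div, inv_pow]
  rw [hpow, Real.norm_of_nonneg (sq_nonneg _), Real.norm_of_nonneg (sq_nonneg _)]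
  gcongr
  exact abs_le_cosh t

theorem tendsto_sech_sq_cocompact :
    Tendsto (fun t : ℝ => (1 / Real.cosh t) ^ 2) (cocompact ℝ) (𝓝 0) :=
  sech_sq_isBigO_abs_rpow_neg_two.trans_tendsto
    ((tendsto_rpow_neg_atTop two_pos).comp (tendsto_norm_cocompact_atTop (E := ℝ)))

/-- The function `μ̂₁` whose sum over the translates by multiples of `h` is, up to the factor `2b`,
the Melnikov potential `L̂₁`. Mathlib has no `sech`; it is written as `1 / cosh`. -/
noncomputable def hatmu1 (a b s : ℝ) : ℝ :=
  a / b ^ 3 - a * b / (a ^ 2 * (1 / Real.cosh s) ^ 2 + b ^ 2 * Real.tanh s ^ 2) ^ 2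

theorem hatmu1_eq_sech_sq (a b t : ℝ) :
    hatmu1 a b t =
      a / b ^ 3 - a * b / (b ^ 2 + (a ^ 2 - b ^ 2) * (1 / Real.cosh t) ^ 2) ^ 2 := by
  have htanh : Real.tanh t ^ 2 = 1 - (1 / Real.cosh t) ^ 2 := by
    have hcosh := (Real.cosh_pos t).ne'
    rw [Real.tanh_eq_sinh_div_cosh, div_pow, Real.sinh_sq]
    field_simp
  rw [hatmu1, htanh]
  ring

theorem hatmu1_isBigO_sech_sq (a : ℝ) {b : ℝ} (hb : b ≠ 0) :
    hatmu1 a b =O[cocompact ℝ] fun t => (1 / Real.cosh t) ^ 2 := by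
  let g : ℝ → ℝ := fun u => a / b ^ 3 - a * b / (b ^ 2 + (a ^ 2 - b ^ 2) * u) ^ 2
  have hg_zero : g 0 = 0 := by
    simp only [g]
    field_simp
    ring
  have hg_diff : DifferentiableAt ℝ g 0 := by
    have hden : (b ^ 2 + (a ^ 2 - b ^ 2) * 0) ^ 2 ≠ 0 := by simpa using hb
    fun_prop (disch := exact hden)
  have hg : g =O[𝓝 0] fun u => u := by
    simpa only [hg_zero, sub_zero] using hg_diff.isBigO_sub
  exact (hg.comp_tendsto tendsto_sech_sq_cocompact).congr_left
    fun t => (hatmu1_eq_sech_sq a b t).symm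

theorem hatmu1_summable_general (a : ℝ) {b h : ℝ} (hb : b ≠ 0) (hh : h ≠ 0) (s : ℝ) :
    Summable (fun j : ℤ => hatmu1 a b (s + j * h)) :=
  summable_comp_add_intCast_mul_of_isBigO_rpow one_lt_two
    ((hatmu1_isBigO_sech_sq a hb).trans sech_sq_isBigO_abs_rpow_neg_two) hh s

/-- For `0 < b < a`, `h > 0` with `sinh(h/2) = √(a² − b²)/b`, and
`μ̂₁(s) = a/b³ − ab/(a² sech² s + b² tanh² s)²`, the family `(μ̂₁(s + jh))_{j ∈ ℤ}`
is summable for every `s ∈ ℝ`. -/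
theorem hatmu1_summable (a b h : ℝ) (hb : 0 < b) (hab : b < a) (hh : 0 < h)
    (hsinh : Real.sinh (h / 2) = Real.sqrt (a ^ 2 - b ^ 2) / b)
    (μ : ℝ → ℝ)
    (hμ : μ = fun s => a / b ^ 3 -
      a * b / (a ^ 2 * (1 / Real.cosh s) ^ 2 + b ^ 2 * Real.tanh s ^ 2) ^ 2)
    (s : ℝ) :
    Summable (fun j : ℤ => μ (s + j * h)) := by
  subst hμ
  exact hatmu1_summable_general a hb.ne' hh.ne' s
end

section
/- Let 0 < b < a be real numbers, let h > 0 be determined by sinh(h/2) = √(a² − b²)/b, let μ̂₁(s) = a/b³ − ab/(a² sech² s + b² tanh² s)², and define L̂₁ : ℝ → ℝ by L̂₁(s) = 2b·Σ_{j∈ℤ} μ̂₁(s + jh). Then L̂₁ is not constant: there exist s₁, s₂ ∈ ℝ with L̂₁(s₁) ≠ L̂₁(s₂). -/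
/-!
Since `a = b cosh (h / 2)`, the denominator of `μ̂₁` factors as a multiple of
`cosh (s - h / 2) * cosh (s + h / 2)`, and the addition theorem for `tanh` turns `μ̂₁ s` into a
linear combination of `tanh (s + h / 2) - tanh (s - h / 2)` and
`sech² (s - h / 2) + sech² (s + h / 2)`. Summed over the translates by multiples of `h`, the first
part telescopes to a constant and the second becomes a nonzero multiple of a translate of
`P x = ∑ j, sech² (x + j h)`.

Were `P` equal to a constant `c` on the real line, then `cosh² z * (c - R z) = 1` there, where `R`
consists of the terms with `j ≠ 0`. Near the imaginary axis `R` is holomorphic, so by the identity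
theorem the equation would persist up to the zero `π i / 2` of `cosh`, where its left side vanishes.
-/

open Filter Set Topology

lemma hasSum_int_sub_of_monotone {u : ℤ → ℝ} {l m : ℝ} (hu : Monotone u)
    (hl : Tendsto u atBot (𝓝 l)) (hm : Tendsto u atTop (𝓝 m)) :
    HasSum (fun j : ℤ ↦ u (j + 1) - u j) (m - l) := by
  have hnonneg (j : ℤ) : 0 ≤ u (j + 1) - u j := sub_nonneg.2 (hu (by lia))
  have hpos : HasSum (fun n : ℕ ↦ u (n + 1) - u n) (m - u 0) := by
    rw [hasSum_iff_tendsto_nat_of_nonneg fun n ↦ hnonneg n]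
    have hsum (n : ℕ) : ∑ i ∈ Finset.range n, (u (i + 1) - u i) = u n - u 0 := by
      simpa using Finset.sum_range_sub (fun i : ℕ ↦ u i) n
    simp only [hsum]
    exact (hm.comp tendsto_natCast_atTop_atTop).sub_const (u 0)
  have hneg : HasSum (fun n : ℕ ↦ u (-(n + 1) + 1) - u (-(n + 1))) (u 0 - l) := by
    rw [hasSum_iff_tendsto_nat_of_nonneg fun n ↦ hnonneg _]
    have hsum (n : ℕ) :
        ∑ i ∈ Finset.range n, (u (-(i + 1) + 1) - u (-(i + 1))) = u 0 - u (-n) := by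
      simpa using Finset.sum_range_sub' (fun i : ℕ ↦ u (-i)) n
    simp only [hsum]
    exact (hl.comp
      (tendsto_neg_atTop_atBot.comp tendsto_natCast_atTop_atTop)).const_sub (u 0)
  have hsum := HasSum.of_nat_of_neg_add_one (f := fun j : ℤ ↦ u (j + 1) - u j) hpos hneg
  rwa [sub_add_sub_cancel] at hsum

lemma eqOn_of_forall_ofReal_eq {E : Type*} [NormedAddCommGroup E] [NormedSpace ℂ E]
    [CompleteSpace E] {f g : ℂ → E} {U : Set ℂ} {x₀ : ℝ} (hf : DifferentiableOn ℂ f U)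
    (hg : DifferentiableOn ℂ g U) (hUo : IsOpen U) (hUc : IsPreconnected U) (hx₀ : (x₀ : ℂ) ∈ U)
    (hfg : ∀ x : ℝ, (x : ℂ) ∈ U → f x = g x) : EqOn f g U := by
  have hofReal : Tendsto ((↑) : ℝ → ℂ) (𝓝[≠] x₀) (𝓝[≠] x₀) :=
    Complex.continuous_ofReal.continuousWithinAt.tendsto_nhdsWithin fun x hx ↦ by simpa using hx
  have hmem : ∀ᶠ x : ℝ in 𝓝[≠] x₀, (x : ℂ) ∈ U :=
    hofReal.eventually (nhdsWithin_le_nhds (hUo.mem_nhds hx₀))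
  exact (hf.analyticOnNhd hUo).eqOn_of_preconnected_of_frequently_eq (hg.analyticOnNhd hUo) hUc hx₀
    (hofReal.frequently (hmem.mono hfg).frequently)

section RealHyperbolic

open Real

lemma cosh_sub_mul_cosh_add (x y : ℝ) :
    cosh (x - y) * cosh (x + y) = cosh x ^ 2 + sinh y ^ 2 := by
  rw [cosh_sub, cosh_add]
  linear_combination cosh x ^ 2 * cosh_sq y + sinh y ^ 2 * cosh_sq x

lemma tanh_sub_tanh (x y : ℝ) : tanh x - tanh y = sinh (x - y) / (cosh x * cosh y) := by
  rw [tanh_eq_sinh_div_cosh, tanh_eq_sinh_div_cosh, sinh_sub,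
    div_sub_div _ _ (cosh_pos x).ne' (cosh_pos y).ne']

lemma tanh_monotone : Monotone tanh := fun x y hxy ↦ by
  rw [← sub_nonneg, tanh_sub_tanh]
  have := sinh_nonneg_iff.2 (sub_nonneg.2 hxy)
  positivity

lemma range_tanh : range tanh = Ioo (-1) 1 := by
  rw [← image_univ, tanh_bijOn.image_eq]

lemma tendsto_tanh_atTop : Tendsto tanh atTop (𝓝 1) :=
  tendsto_atTop_isLUB tanh_monotone (range_tanh ▸ isLUB_Ioo (by norm_num))

lemma tendsto_tanh_atBot : Tendsto tanh atBot (𝓝 (-1)) :=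
  tendsto_atBot_isGLB tanh_monotone (range_tanh ▸ isGLB_Ioo (by norm_num))

lemma sinh_sub_mul_tanh_sub_tanh_sq (x y : ℝ) :
    sinh (x - y) * (tanh x - tanh y) ^ 2 = 2 * cosh (x - y) * (tanh x - tanh y) -
      sinh (x - y) * (1 / cosh x ^ 2 + 1 / cosh y ^ 2) := by
  have haddition : sinh (x - y) ^ 2 =
      2 * cosh (x - y) * (cosh x * cosh y) - (cosh x ^ 2 + cosh y ^ 2) := by
    rw [sinh_sub, cosh_sub]
    linear_combination (-cosh y ^ 2) * cosh_sq x - cosh x ^ 2 * cosh_sq y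
  rw [tanh_sub_tanh]
  field_simp
  linear_combination sinh (x - y) * haddition

lemma hasSum_tanh_sub_tanh {h : ℝ} (hh : 0 < h) (x : ℝ) :
    HasSum (fun j : ℤ ↦ tanh (x + (j + 1) * h) - tanh (x + j * h)) 2 := by
  have htop : Tendsto (fun j : ℤ ↦ x + j * h) atTop atTop :=
    tendsto_atTop_add_const_left _ _ (tendsto_intCast_atTop_atTop.atTop_mul_const hh)
  have hbot : Tendsto (fun j : ℤ ↦ x + j * h) atBot atBot :=
    tendsto_atBot_add_const_left _ _ (tendsto_intCast_atBot_iff.2 tendsto_id |>.atBot_mul_const' hh)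
  have hmono : Monotone fun j : ℤ ↦ tanh (x + j * h) := fun i j hij ↦
    tanh_monotone (by gcongr)
  convert hasSum_int_sub_of_monotone hmono (tendsto_tanh_atBot.comp hbot)
    (tendsto_tanh_atTop.comp htop) using 2 <;> norm_num

lemma one_div_cosh_sq_add_one_div_cosh_sq_le {x y : ℝ} (hxy : y < x) :
    1 / cosh x ^ 2 + 1 / cosh y ^ 2 ≤
      2 * cosh (x - y) / sinh (x - y) * (tanh x - tanh y) := by
  have hs : 0 < sinh (x - y) := sinh_pos_iff.2 (sub_pos.2 hxy)
  rw [div_mul_eq_mul_div, le_div_iff₀ hs]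
  nlinarith [sinh_sub_mul_tanh_sub_tanh_sq x y, mul_nonneg hs.le (sq_nonneg (tanh x - tanh y))]

lemma summable_one_div_cosh_sq {h : ℝ} (hh : 0 < h) (x : ℝ) :
    Summable fun j : ℤ ↦ 1 / cosh (x + j * h) ^ 2 := by
  refine .of_nonneg_of_le (fun j ↦ by positivity) (fun j ↦ ?_)
    ((hasSum_tanh_sub_tanh hh x).summable.mul_left (2 * cosh h / sinh h))
  have hstep : x + (j + 1) * h - (x + j * h) = h := by ring
  refine (le_add_of_nonneg_left (by positivity)).trans
    ((one_div_cosh_sq_add_one_div_cosh_sq_le (x := x + (j + 1) * h) ?_).trans_eq ?_)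
  · linarith
  · rw [hstep]

/-- The `h`-periodization `∑ j, sech² (x + j h)` of `sech²`. It equals `c - ℘ (x - π i / 2)` for
a constant `c` and the Weierstrass function `℘` of the lattice spanned by `h` and `π i`. -/
noncomputable def sechSqSum (h x : ℝ) : ℝ :=
  ∑' j : ℤ, 1 / cosh (x + j * h) ^ 2

end RealHyperbolic

section ComplexHyperbolic

open Complex

lemma abs_sinh_re_le_norm_cosh (z : ℂ) : |Real.sinh z.re| ≤ ‖cosh z‖ := by
  have h := abs_norm_sub_norm_le (exp z) (-exp (-z))
  rw [norm_neg, norm_exp, norm_exp, sub_neg_eq_add, neg_re] at h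
  rw [cosh, Real.sinh_eq, norm_div, abs_div, norm_ofNat, abs_two]
  gcongr

lemma abs_re_le_norm_cosh (z : ℂ) : |z.re| ≤ ‖cosh z‖ :=
  (Real.self_le_sinh_iff.2 (abs_nonneg _)).trans
    (Real.abs_sinh z.re ▸ abs_sinh_re_le_norm_cosh z)

/-- The strip `|Re z| < h / 2`, on which no zero of any `cosh (z + j * h)` with `j ≠ 0` lies. -/
def centralStrip (h : ℝ) : Set ℂ := {z | |z.re| < h / 2}

lemma isOpen_centralStrip (h : ℝ) : IsOpen (centralStrip h) :=
  isOpen_lt (by fun_prop) (by fun_prop)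

lemma convex_centralStrip (h : ℝ) : Convex ℝ (centralStrip h) := by
  simpa only [centralStrip, abs_lt, ofPred_and] using
    (convex_halfSpace_re_gt _).inter (convex_halfSpace_re_lt _)

variable {h : ℝ} {z : ℂ} {j : ℤ}

lemma abs_mul_half_le_norm_cosh_add (hh : 0 < h) (hz : z ∈ centralStrip h) (hj : j ≠ 0) :
    |(j : ℝ)| * (h / 2) ≤ ‖cosh (z + j * h)‖ := by
  have hj' : (1 : ℝ) ≤ |(j : ℝ)| := by exact_mod_cast Int.one_le_abs hj
  calc |(j : ℝ)| * (h / 2) ≤ |(j : ℝ)| * h - h / 2 := by nlinarith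
    _ ≤ |j * h| - |z.re| := by
      rw [abs_mul, abs_of_pos hh]
      exact sub_le_sub_left (le_of_lt hz) _
    _ ≤ |z.re + j * h| := by
      simpa [add_comm] using abs_sub_abs_le_abs_sub (j * h) (-z.re)
    _ ≤ ‖cosh (z + j * h)‖ := by simpa using abs_re_le_norm_cosh (z + j * h)

lemma cosh_add_int_mul_ne_zero (hh : 0 < h) (hz : z ∈ centralStrip h) (hj : j ≠ 0) :
    cosh (z + j * h) ≠ 0 :=
  norm_pos_iff.1 ((by positivity : 0 < |(j : ℝ)| * (h / 2)).trans_le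
    (abs_mul_half_le_norm_cosh_add hh hz hj))

lemma norm_one_div_cosh_add_sq_le (hh : 0 < h) (hz : z ∈ centralStrip h) (hj : j ≠ 0) :
    ‖1 / cosh (z + j * h) ^ 2‖ ≤ (h / 2)⁻¹ ^ 2 * (1 / (j : ℝ) ^ 2) := by
  rw [norm_div, norm_one, norm_pow]
  calc 1 / ‖cosh (z + j * h)‖ ^ 2 ≤ 1 / (|(j : ℝ)| * (h / 2)) ^ 2 := by
        gcongr
        exact abs_mul_half_le_norm_cosh_add hh hz hj
    _ = (h / 2)⁻¹ ^ 2 * (1 / (j : ℝ) ^ 2) := by rw [mul_pow, sq_abs]; field_simp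

lemma differentiableOn_tsum_ne_zero_one_div_cosh_sq (hh : 0 < h) :
    DifferentiableOn ℂ (fun z ↦ ∑' j : {j : ℤ // j ≠ 0}, 1 / cosh (z + j * h) ^ 2)
      (centralStrip h) := by
  have hsum : Summable fun j : ℤ ↦ (h / 2)⁻¹ ^ 2 * (1 / (j : ℝ) ^ 2) :=
    (Real.summable_one_div_int_pow.2 one_lt_two).mul_left _
  refine differentiableOn_tsum_of_summable_norm (hsum.subtype {j : ℤ | j ≠ 0}) (fun j z hz ↦ ?_)
    (isOpen_centralStrip h) (fun j z hz ↦ norm_one_div_cosh_add_sq_le hh hz j.2)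
  have := pow_ne_zero 2 (cosh_add_int_mul_ne_zero hh hz j.2)
  exact DifferentiableAt.differentiableWithinAt (by fun_prop (disch := assumption))

lemma ofReal_sechSqSum (hh : 0 < h) (x : ℝ) : (sechSqSum h x : ℂ) =
    1 / cosh x ^ 2 + ∑' j : {j : ℤ // j ≠ 0}, 1 / cosh (x + j * h) ^ 2 := by
  have hs : Summable fun j : ℤ ↦ 1 / cosh (x + j * h) ^ 2 := by
    simpa using summable_ofReal.2 (summable_one_div_cosh_sq hh x)
  have hsplit := hs.tsum_subtype_add_tsum_subtype_compl {0}
  rw [tsum_singleton (0 : ℤ) fun j : ℤ ↦ 1 / cosh (x + j * h) ^ 2] at hsplit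
  simpa [sechSqSum, ofReal_tsum] using! hsplit.symm

theorem exists_sechSqSum_ne (hh : 0 < h) : ∃ x y, sechSqSum h x ≠ sechSqSum h y := by
  by_contra! hconst
  let R : ℂ → ℂ := fun z ↦ ∑' j : {j : ℤ // j ≠ 0}, 1 / cosh (z + j * h) ^ 2
  have hR : DifferentiableOn ℂ R (centralStrip h) :=
    differentiableOn_tsum_ne_zero_one_div_cosh_sq hh
  have hdiff : DifferentiableOn ℂ (fun z ↦ cosh z ^ 2 * (sechSqSum h 0 - R z))
      (centralStrip h) := by fun_prop
  have hreal (x : ℝ) : cosh x ^ 2 * (sechSqSum h 0 - R x) = 1 := by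
    have hx : cosh (x : ℂ) ≠ 0 := by exact_mod_cast (Real.cosh_pos x).ne'
    rw [hconst 0 x, ofReal_sechSqSum hh, add_sub_cancel_right]
    field_simp
  have hone : EqOn (fun z ↦ cosh z ^ 2 * (sechSqSum h 0 - R z)) 1 (centralStrip h) :=
    eqOn_of_forall_ofReal_eq (x₀ := 0) hdiff (differentiableOn_const 1) (isOpen_centralStrip h)
      (convex_centralStrip h).isPreconnected (by simp [centralStrip, hh]) fun x _ ↦ hreal x
  have hzero : cosh (Real.pi / 2 * I) = 0 := by rw [cosh_mul_I, cos_pi_div_two]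
  simpa [hzero] using hone (show (Real.pi / 2 * I : ℂ) ∈ centralStrip h by simp [centralStrip, hh])

end ComplexHyperbolic

section Melnikov

open Real

lemma sq_eq_sq_mul_cosh_sq_of_sinh_eq {a b k : ℝ} (hb : b ≠ 0) (hab : b ^ 2 ≤ a ^ 2)
    (hk : sinh k = √(a ^ 2 - b ^ 2) / b) : a ^ 2 = b ^ 2 * cosh k ^ 2 := by
  rw [cosh_sq, hk, div_pow, sq_sqrt (sub_nonneg.2 hab)]
  field_simp
  ring

lemma tanh_mul_tanh_sub_tanh_sq (x k : ℝ) :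
    tanh k * (tanh (x + k) - tanh (x - k)) ^ 2 =
      (1 + tanh k ^ 2) * (tanh (x + k) - tanh (x - k)) -
        tanh k * (1 / cosh (x - k) ^ 2 + 1 / cosh (x + k) ^ 2) := by
  have h := sinh_sub_mul_tanh_sub_tanh_sq (x + k) (x - k)
  rw [show x + k - (x - k) = 2 * k by ring, sinh_two_mul, cosh_two_mul] at h
  rw [tanh_eq_sinh_div_cosh k]
  field_simp at h ⊢
  linear_combination h

lemma cosh_sq_div_cosh_sub_mul_cosh_add (s k : ℝ) :
    cosh s ^ 2 / (cosh (s - k) * cosh (s + k)) =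
      1 - tanh k / 2 * (tanh (s + k) - tanh (s - k)) := by
  rw [tanh_sub_tanh, show s + k - (s - k) = 2 * k by ring, sinh_two_mul, tanh_eq_sinh_div_cosh]
  field_simp
  linear_combination -cosh_sub_mul_cosh_add s k

/-- The Melnikov density `μ̂₁` of the curvature flow, with `sech` written as `1 / cosh`. -/
noncomputable def melnikovDensity (a b s : ℝ) : ℝ :=
  a / b ^ 3 - a * b / (a ^ 2 * (1 / cosh s) ^ 2 + b ^ 2 * tanh s ^ 2) ^ 2

lemma melnikovDensity_eq_one_sub_sq {a b k : ℝ} (hb : b ≠ 0)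
    (ha : a ^ 2 = b ^ 2 * cosh k ^ 2) (s : ℝ) :
    melnikovDensity a b s =
      a / b ^ 3 * (1 - (cosh s ^ 2 / (cosh (s - k) * cosh (s + k))) ^ 2) := by
  have hdenom : a ^ 2 * (1 / cosh s) ^ 2 + b ^ 2 * tanh s ^ 2 =
      b ^ 2 * (cosh (s - k) * cosh (s + k) / cosh s ^ 2) := by
    rw [ha, cosh_sub_mul_cosh_add, tanh_eq_sinh_div_cosh]
    field_simp
    linear_combination cosh_sq k - cosh_sq s
  rw [melnikovDensity, hdenom]
  field_simp

lemma melnikovDensity_eq {a b k : ℝ} (hb : b ≠ 0) (ha : a ^ 2 = b ^ 2 * cosh k ^ 2) (s : ℝ) :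
    melnikovDensity a b s = a / b ^ 3 *
      (tanh k * (3 - tanh k ^ 2) / 4 * (tanh (s + k) - tanh (s - k)) +
        tanh k ^ 2 / 4 * (1 / cosh (s - k) ^ 2 + 1 / cosh (s + k) ^ 2)) := by
  rw [melnikovDensity_eq_one_sub_sq hb ha, cosh_sq_div_cosh_sub_mul_cosh_add]
  linear_combination -(a / b ^ 3 * (tanh k / 4)) * tanh_mul_tanh_sub_tanh_sq s k

theorem hasSum_melnikovDensity {a b h : ℝ} (hb : b ≠ 0) (hh : 0 < h)
    (ha : a ^ 2 = b ^ 2 * cosh (h / 2) ^ 2) (x : ℝ) :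
    HasSum (fun j : ℤ ↦ melnikovDensity a b (x + h / 2 + j * h)) (a / b ^ 3 *
      (tanh (h / 2) * (3 - tanh (h / 2) ^ 2) / 2 + tanh (h / 2) ^ 2 / 2 * sechSqSum h x)) := by
  have hsech : HasSum (fun j : ℤ ↦ 1 / cosh (x + j * h) ^ 2) (sechSqSum h x) :=
    (summable_one_div_cosh_sq hh x).hasSum
  have hsech' : HasSum (fun j : ℤ ↦ 1 / cosh (x + (j + 1) * h) ^ 2) (sechSqSum h x) := by
    simpa [Function.comp_def] using (Equiv.addRight (1 : ℤ)).hasSum_iff.2 hsech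
  have hleft (j : ℤ) : x + h / 2 + j * h - h / 2 = x + j * h := by ring
  have hright (j : ℤ) : x + h / 2 + j * h + h / 2 = x + (j + 1) * h := by ring
  simp only [melnikovDensity_eq hb ha, hleft, hright]
  refine HasSum.mul_left _ ?_
  convert ((hasSum_tanh_sub_tanh hh x).mul_left _).add ((hsech.add hsech').mul_left _) using 1
  ring

end Melnikov

/-- The homoclinic Melnikov potential `L̂₁(s) = 2b Σ_{j∈ℤ} μ̂₁(s + jh)` is not constant. -/
theorem homoclinic_potential_not_constant (a b h : ℝ) (hb : 0 < b) (hab : b < a)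
    (hh : 0 < h)
    (hsinh : Real.sinh (h / 2) = Real.sqrt (a ^ 2 - b ^ 2) / b)
    (μ L : ℝ → ℝ)
    (hμ : μ = fun s => a / b ^ 3 -
      a * b / (a ^ 2 * (1 / Real.cosh s) ^ 2 + b ^ 2 * Real.tanh s ^ 2) ^ 2)
    (hL : L = fun s => 2 * b * ∑' j : ℤ, μ (s + j * h)) :
    ∃ s₁ s₂ : ℝ, L s₁ ≠ L s₂ := by
  obtain ⟨x, y, hxy⟩ := exists_sechSqSum_ne hh
  refine ⟨x + h / 2, y + h / 2, fun hLxy ↦ hxy ?_⟩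
  have ha : 0 < a := hb.trans hab
  have haxes : a ^ 2 = b ^ 2 * Real.cosh (h / 2) ^ 2 :=
    sq_eq_sq_mul_cosh_sq_of_sinh_eq hb.ne' (by gcongr) hsinh
  have hL_eq (t : ℝ) : L (t + h / 2) = 2 * b * (a / b ^ 3 *
      (Real.tanh (h / 2) * (3 - Real.tanh (h / 2) ^ 2) / 2 +
        Real.tanh (h / 2) ^ 2 / 2 * sechSqSum h t)) := by
    rw [hL, hμ, ← (hasSum_melnikovDensity hb.ne' hh haxes t).tsum_eq]
    rfl
  have htanh : Real.tanh (h / 2) ≠ 0 := by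
    rw [Real.tanh_eq_sinh_div_cosh]
    exact div_ne_zero (Real.sinh_ne_zero.2 (half_pos hh).ne') (Real.cosh_pos _).ne'
  simpa [hL_eq, hb.ne', ha.ne', htanh] using hLxy
end

section
/- Let 0 < b < a be real numbers, c = √(a² − b²), and let h > 0 be determined by sinh(h/2) = c/b. Then a complex number s satisfies b²·cosh²(s) + c² = 0 if and only if s belongs to the set S = {h/2 + πi/2 + jπi : j ∈ ℤ} ∪ {−h/2 + πi/2 + jπi : j ∈ ℤ}. Equivalently, the zeros of the complex function g(s) = b² + c²·sech²(s) (defined where cosh s ≠ 0) are exactly the points of S. -/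
/-!
By the addition formulas, `cosh² s + sinh² w = cosh (s - w) cosh (s + w)`. As `c = b sinh (h/2)`,
the function `b² cosh² s + c²` is `b²` times such a product with `w = h/2`, so its zeros are the
zeros `πi/2 + jπi` of `cosh` translated by `±h/2`.
-/

open Complex
open scoped Real

theorem complex_cosh_eq_zero_iff {z : ℂ} :
    cosh z = 0 ↔ ∃ j : ℤ, z = π * I / 2 + j * π * I := by
  rw [← cos_mul_I, cos_eq_zero_iff]
  constructor
  · rintro ⟨k, hk⟩
    refine ⟨-(k + 1), ?_⟩
    push_cast
    linear_combination -I * hk + z * I_sq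
  · rintro ⟨j, rfl⟩
    refine ⟨-(j + 1), ?_⟩
    push_cast
    linear_combination (π / 2 + j * π) * I_sq

theorem complex_cosh_sub_mul_cosh_add (s w : ℂ) :
    cosh (s - w) * cosh (s + w) = cosh s ^ 2 + sinh w ^ 2 := by
  rw [cosh_sub, cosh_add]
  linear_combination cosh s ^ 2 * cosh_sq w - sinh w ^ 2 * sinh_sq s

theorem complex_cosh_sq_add_sinh_sq_eq_zero_iff {s w : ℂ} :
    cosh s ^ 2 + sinh w ^ 2 = 0 ↔
      ∃ j : ℤ, s = w + π * I / 2 + j * π * I ∨ s = -w + π * I / 2 + j * π * I := by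
  rw [← complex_cosh_sub_mul_cosh_add, mul_eq_zero, complex_cosh_eq_zero_iff,
    complex_cosh_eq_zero_iff, exists_or]
  simp only [sub_eq_iff_eq_add', ← eq_neg_add_iff_add_eq, add_comm s w, add_assoc]

theorem add_mul_inv_pow_eq_zero_iff {K : Type*} [DivisionSemiring K] {x : K} (hx : x ≠ 0)
    (a b : K) (n : ℕ) : a + b * x⁻¹ ^ n = 0 ↔ a * x ^ n + b = 0 := by
  have hxn : x ^ n ≠ 0 := pow_ne_zero n hx
  rw [← mul_eq_zero_iff_right hxn, add_mul, inv_pow, inv_mul_cancel_right₀ hxn]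

theorem zeros_of_g_general {b c h : ℂ} (hb : b ≠ 0) (hsinh : sinh (h / 2) = c / b) :
    (∀ s : ℂ, b ^ 2 * cosh s ^ 2 + c ^ 2 = 0 ↔
      ∃ j : ℤ, s = h / 2 + π * I / 2 + j * π * I ∨ s = -(h / 2) + π * I / 2 + j * π * I) ∧
    (∀ s : ℂ, cosh s ≠ 0 → (b ^ 2 + c ^ 2 * (cosh s)⁻¹ ^ 2 = 0 ↔
      ∃ j : ℤ, s = h / 2 + π * I / 2 + j * π * I ∨ s = -(h / 2) + π * I / 2 + j * π * I)) := by
  have hc : c = b * sinh (h / 2) := by rw [hsinh, mul_div_cancel₀ c hb]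
  have zeros (s : ℂ) : b ^ 2 * cosh s ^ 2 + c ^ 2 = 0 ↔
      ∃ j : ℤ, s = h / 2 + π * I / 2 + j * π * I ∨ s = -(h / 2) + π * I / 2 + j * π * I := by
    rw [hc, mul_pow, ← mul_add, mul_eq_zero_iff_left (pow_ne_zero 2 hb),
      complex_cosh_sq_add_sinh_sq_eq_zero_iff]
  exact ⟨zeros, fun s hs ↦ (add_mul_inv_pow_eq_zero_iff hs _ _ 2).trans (zeros s)⟩

/-- For `0 < b < a`, `c = √(a² − b²)` and `h > 0` with `sinh(h/2) = c/b`, the zeros of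
`s ↦ b² cosh² s + c²` in `ℂ` are exactly the points `±h/2 + πi/2 + jπi`, `j ∈ ℤ`;
equivalently, these are the zeros of `g(s) = b² + c² sech² s` (where `cosh s ≠ 0`). -/
theorem zeros_of_g (a b c h : ℝ) (hb : 0 < b) (hab : b < a)
    (hc : c = Real.sqrt (a ^ 2 - b ^ 2)) (hh : 0 < h)
    (hsinh : Real.sinh (h / 2) = c / b) :
    (∀ s : ℂ, (b : ℂ) ^ 2 * Complex.cosh s ^ 2 + (c : ℂ) ^ 2 = 0 ↔
      (∃ j : ℤ, s = h / 2 + Real.pi * Complex.I / 2 + j * Real.pi * Complex.I ∨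
                s = -(h / 2) + Real.pi * Complex.I / 2 + j * Real.pi * Complex.I)) ∧
    (∀ s : ℂ, Complex.cosh s ≠ 0 →
      ((b : ℂ) ^ 2 + (c : ℂ) ^ 2 * ((Complex.cosh s)⁻¹) ^ 2 = 0 ↔
      (∃ j : ℤ, s = h / 2 + Real.pi * Complex.I / 2 + j * Real.pi * Complex.I ∨
                s = -(h / 2) + Real.pi * Complex.I / 2 + j * Real.pi * Complex.I))) := by
  exact zeros_of_g_general (ofReal_ne_zero.mpr hb.ne') (by exact_mod_cast hsinh)
end
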